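/- Let N ≥ 1 and let k ≥ 2 be an even integer. Let a : ℕ → ℤ satisfy: a(1) = 1; a(mn) = a(m)·a(n) for all coprime positive integers m, n; a(p^(r+2)) = a(p)·a(p^(r+1)) − p^(k−1)·a(p^r) for every prime p ∤ N and every r ≥ 0; and a(p^(r+1)) = a(p)·a(p^r) for every prime p | N and every r ≥ 0. Suppose a(2) ∉ {2^(k/2), −2^(k/2)} and a(3) ∉ {3^(k/2), −3^(k/2)}. If n is the smallest positive integer with a(n) = 0 (i.e. a(n) = 0 and a(m) ≠ 0 for all 1 ≤ m < n), then n is prime. -/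

import Mathlib

/-!
By multiplicativity, `a n = 0` forces `a (p ^ e) = 0` for some prime power `p ^ e` exactly
dividing `n`. For `p ∤ N` the numbers `a (p ^ r)` are the values at `A = a p` of the Dickson
polynomials of the second kind with parameter `B = p ^ (k - 1)`, and these do not vanish when
`A ≠ 0`. Indeed, if `p ^ (k / 2) ∤ A`, then `2 v_p(A) < v_p(B)`, so the term `A u_{r+1}` of the
recurrence `u_{r+2} = A u_{r+1} - B u_r` always dominates `p`-adically. If `p ^ (k / 2) ∣ A`, say
`A = p ^ (k / 2) c`, then `A ^ 2 = p c ^ 2 B`, so the discriminant `A ^ 2 - 4 B` is nonnegative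
unless `p ≤ 3` and `c = ± 1`. Hence already `a p = 0`, and minimality of `n` gives `n = p`.
-/

section Dickson

open Polynomial

section CommRing

variable {R : Type*} [CommRing R]

theorem eval_dickson_two_zero (A B : R) : (dickson 2 B 0).eval A = 1 := by
  norm_num [dickson_zero]

theorem eval_dickson_add_two (k : ℕ) (A B : R) (r : ℕ) :
    (dickson k B (r + 2)).eval A =
      A * (dickson k B (r + 1)).eval A - B * (dickson k B r).eval A := by
  simp only [dickson_add_two, eval_sub, eval_mul, eval_X, eval_C]

theorem eq_eval_dickson_two {A B : R} {u : ℕ → R} (h_zero : u 0 = 1) (h_one : u 1 = A)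
    (h_add_two : ∀ r, u (r + 2) = A * u (r + 1) - B * u r) (r : ℕ) :
    u r = (dickson 2 B r).eval A := by
  induction r using Nat.twoStepInduction with
  | zero => rw [h_zero, eval_dickson_two_zero]
  | one => rw [h_one, dickson_one, eval_X]
  | more r ih ih' => rw [h_add_two, ih, ih', eval_dickson_add_two]

theorem eval_neg_dickson_two (A B : R) (r : ℕ) :
    (dickson 2 B r).eval (-A) = (-1) ^ r * (dickson 2 B r).eval A := by
  refine (eq_eval_dickson_two (u := fun r ↦ (-1) ^ r * (dickson 2 B r).eval A)
    ?_ ?_ (fun r ↦ ?_) r).symm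
  · simp only [pow_zero, one_mul, eval_dickson_two_zero]
  · simp only [pow_one, dickson_one, eval_X, neg_one_mul]
  · simp only [eval_dickson_add_two]
    ring

end CommRing

section Valuation

variable {R : Type*} [CommRing R] [IsDomain R] {p A B : R}

theorem emultiplicity_eval_dickson_two (hp : Prime p)
    (hAB : 2 * emultiplicity p A < emultiplicity p B) (r : ℕ) :
    emultiplicity p ((dickson 2 B r).eval A) = r * emultiplicity p A := by
  have hA : FiniteMultiplicity p A :=
    finiteMultiplicity_iff_emultiplicity_ne_top.mpr fun h ↦ by simp [h] at hAB
  rw [hA.emultiplicity_eq_multiplicity] at hAB ⊢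
  induction r using Nat.twoStepInduction with
  | zero =>
    rw [eval_dickson_two_zero, emultiplicity_of_one_right hp.not_isUnit, Nat.cast_zero, zero_mul]
  | one => simp [hA.emultiplicity_eq_multiplicity]
  | more r ih ih' =>
    have h_first : emultiplicity p (A * (dickson 2 B (r + 1)).eval A) =
        (r + 2 : ℕ) * multiplicity p A := by
      rw [emultiplicity_mul hp, hA.emultiplicity_eq_multiplicity, ih']
      push_cast
      ring
    have h_second : (r + 2 : ℕ) * multiplicity p A <
        emultiplicity p (B * (dickson 2 B r).eval A) := by
      rw [emultiplicity_mul hp, ih, Nat.cast_add, add_mul, add_comm]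
      have h_top : (r * multiplicity p A : ℕ∞) ≠ ⊤ := mod_cast ENat.natCast_ne_top _
      exact (ENat.add_lt_add_iff_right h_top).mpr hAB
    rw [eval_dickson_add_two, sub_eq_neg_add,
      emultiplicity_add_of_gt (by rwa [emultiplicity_neg, h_first]), h_first]

theorem eval_dickson_two_ne_zero_of_emultiplicity_lt (hp : Prime p)
    (hAB : 2 * emultiplicity p A < emultiplicity p B) (r : ℕ) :
    (dickson 2 B r).eval A ≠ 0 := by
  have hA : emultiplicity p A ≠ ⊤ := fun h ↦ by simp [h] at hAB
  intro h_zero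
  have hr := emultiplicity_eval_dickson_two hp hAB r
  rw [h_zero, emultiplicity_zero] at hr
  exact WithTop.mul_ne_top (ENat.natCast_ne_top r) hA hr.symm

end Valuation

section Order

variable {R : Type*} [CommRing R] [LinearOrder R] [IsStrictOrderedRing R] {A B : R}

theorem eval_dickson_two_pos (hA : 0 < A) (hAB : 4 * B ≤ A ^ 2) (r : ℕ) :
    0 < (dickson 2 B r).eval A := by
  suffices h : 0 < (dickson 2 B r).eval A ∧
      A * (dickson 2 B r).eval A ≤ 2 * (dickson 2 B (r + 1)).eval A from h.1
  induction r with
  | zero =>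
    rw [eval_dickson_two_zero, dickson_one, eval_X]
    exact ⟨one_pos, by linarith⟩
  | succ r ih =>
    obtain ⟨h_pos, h_ratio⟩ := ih
    have h_disc := mul_le_mul_of_nonneg_right hAB h_pos.le
    have h_mul := mul_le_mul_of_nonneg_left h_ratio hA.le
    refine ⟨pos_of_mul_pos_right ((mul_pos hA h_pos).trans_le h_ratio) zero_le_two, ?_⟩
    rw [eval_dickson_add_two]
    linarith

theorem eval_dickson_two_ne_zero_of_four_mul_le_sq (hA : A ≠ 0) (hAB : 4 * B ≤ A ^ 2)
    (r : ℕ) : (dickson 2 B r).eval A ≠ 0 := by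
  rcases hA.lt_or_gt with h_neg | h_pos
  · have h := (eval_dickson_two_pos (neg_pos.mpr h_neg) (by rwa [neg_sq]) r).ne'
    rw [eval_neg_dickson_two] at h
    exact right_ne_zero_of_mul h
  · exact (eval_dickson_two_pos h_pos hAB r).ne'

end Order

theorem four_mul_pow_le_sq_of_pow_dvd {p A : ℤ} {j : ℕ} (hp : 0 < p) (hA : A ≠ 0)
    (h_small : p ≤ 3 → |A| ≠ p ^ (j + 1)) (h_dvd : p ^ (j + 1) ∣ A) :
    4 * p ^ (2 * j + 1) ≤ A ^ 2 := by
  obtain ⟨c, rfl⟩ := h_dvd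
  have hc : 1 ≤ |c| := Int.one_le_abs (right_ne_zero_of_mul hA)
  have h_four : 4 ≤ p * |c| ^ 2 := by
    rcases le_or_gt p 3 with hp3 | hp3
    · have hc1 : |c| ≠ 1 := fun h ↦
        h_small hp3 (by rw [abs_mul, h, mul_one, abs_of_pos (by positivity)])
      have hc2 : 2 ≤ |c| := by lia
      nlinarith
    · nlinarith
  calc 4 * p ^ (2 * j + 1) ≤ p * |c| ^ 2 * p ^ (2 * j + 1) := by gcongr
    _ = (p ^ (j + 1) * c) ^ 2 := by rw [sq_abs]; ring

theorem eval_dickson_two_prime_pow_ne_zero {p : ℕ} (hp : p.Prime) {j : ℕ} {A : ℤ} (hA : A ≠ 0)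
    (h_small : p ≤ 3 → |A| ≠ (p : ℤ) ^ (j + 1)) (r : ℕ) :
    (dickson 2 ((p : ℤ) ^ (2 * j + 1)) r).eval A ≠ 0 := by
  have hpZ : Prime (p : ℤ) := Nat.prime_iff_prime_int.mp hp
  by_cases h_dvd : (p : ℤ) ^ (j + 1) ∣ A
  · exact eval_dickson_two_ne_zero_of_four_mul_le_sq hA (four_mul_pow_le_sq_of_pow_dvd
      (mod_cast hp.pos) hA (fun h ↦ h_small (mod_cast h)) h_dvd) r
  · refine eval_dickson_two_ne_zero_of_emultiplicity_lt hpZ ?_ r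
    have h_lt : emultiplicity (p : ℤ) A < (j + 1 : ℕ) := emultiplicity_lt_iff_not_dvd.mpr h_dvd
    obtain ⟨v, hv⟩ := ENat.ne_top_iff_exists.mp h_lt.ne_top
    rw [emultiplicity_pow_self_of_prime hpZ, ← hv]
    rw [← hv] at h_lt
    norm_cast at h_lt ⊢
    lia

end Dickson

theorem exists_prime_dvd_apply_pow_eq_zero {M : Type*} [CommMonoidWithZero M] [NoZeroDivisors M]
    [Nontrivial M] {f : ℕ → M} (h_one : f 1 = 1)
    (h_mul : ∀ m n : ℕ, 0 < m → 0 < n → m.Coprime n → f (m * n) = f m * f n)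
    {n : ℕ} (hn : n ≠ 0) (h_zero : f n = 0) :
    ∃ p, p.Prime ∧ p ∣ n ∧ ∃ e, f (p ^ e) = 0 := by
  have h_mul' : ∀ m n : ℕ, m.Coprime n → f (m * n) = f m * f n := by
    intro m n h
    rcases m.eq_zero_or_pos with rfl | hm
    · simp [(Nat.coprime_zero_left n).mp h, h_one]
    rcases n.eq_zero_or_pos with rfl | hn
    · simp [(Nat.coprime_zero_right m).mp h, h_one]
    exact h_mul m n hm hn h
  rw [Nat.multiplicative_factorization f h_mul' h_one hn] at h_zero
  obtain ⟨p, hp, hfp⟩ := Finset.prod_eq_zero_iff.mp h_zero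
  exact ⟨p, Nat.prime_of_mem_primeFactors hp, Nat.dvd_of_mem_primeFactors hp, _, hfp⟩

theorem stmt_7_general (N : ℕ) (k : ℕ) (hk : 2 ≤ k) (hke : Even k)
    (a : ℕ → ℤ) (ha1 : a 1 = 1)
    (hmul : ∀ m n : ℕ, 0 < m → 0 < n → Nat.Coprime m n → a (m * n) = a m * a n)
    (hrec : ∀ p : ℕ, p.Prime → ¬ p ∣ N → ∀ r : ℕ,
      a (p ^ (r + 2)) = a p * a (p ^ (r + 1)) - (p : ℤ) ^ (k - 1) * a (p ^ r))
    (hdvd : ∀ p : ℕ, p.Prime → p ∣ N → ∀ r : ℕ, a (p ^ (r + 1)) = a p * a (p ^ r))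
    (h2 : a 2 ≠ 2 ^ (k / 2)) (h2' : a 2 ≠ -(2 ^ (k / 2)))
    (h3 : a 3 ≠ 3 ^ (k / 2)) (h3' : a 3 ≠ -(3 ^ (k / 2)))
    (n : ℕ) (hn : 0 < n) (han : a n = 0) :
    ∃ p, p.Prime ∧ p ∣ n ∧ a p = 0 := by
  obtain ⟨p, hp, hpn, e, hpe⟩ := exists_prime_dvd_apply_pow_eq_zero ha1 hmul hn.ne' han
  refine ⟨p, hp, hpn, by_contra fun hap ↦ ?_⟩
  by_cases hpN : p ∣ N
  · have h_pow (r : ℕ) : a (p ^ r) = a p ^ r := by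
      induction r with
      | zero => rw [pow_zero, pow_zero, ha1]
      | succ r ih => rw [hdvd p hp hpN, ih, pow_succ']
    exact pow_ne_zero e hap (h_pow e ▸ hpe)
  · obtain ⟨j, rfl⟩ : ∃ j, k = 2 * (j + 1) := ⟨k / 2 - 1, by grind⟩
    rw [Nat.mul_div_cancel_left _ two_pos] at h2 h2' h3 h3'
    have h_small (hp3 : p ≤ 3) : |a p| ≠ (p : ℤ) ^ (j + 1) := by
      rw [ne_eq, abs_eq (by positivity), not_or]
      obtain rfl | rfl : p = 2 ∨ p = 3 := by have := hp.two_le; lia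
      exacts [⟨h2, h2'⟩, ⟨h3, h3'⟩]
    rw [eq_eval_dickson_two (u := fun r ↦ a (p ^ r)) ha1 (by simp) (hrec p hp hpN)] at hpe
    exact eval_dickson_two_prime_pow_ne_zero hp hap h_small e hpe

/-- For an integer-valued sequence satisfying the Hecke relations of a primitive form
of even weight `k` and level `N` with trivial character, if `a 2 ≠ ±2^(k/2)` and
`a 3 ≠ ±3^(k/2)`, then the smallest positive integer `n` with `a n = 0` is prime. -/
theorem stmt_7 (N : ℕ) (hN : 1 ≤ N) (k : ℕ) (hk : 2 ≤ k) (hke : Even k)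
    (a : ℕ → ℤ) (ha1 : a 1 = 1)
    (hmul : ∀ m n : ℕ, 0 < m → 0 < n → Nat.Coprime m n → a (m * n) = a m * a n)
    (hrec : ∀ p : ℕ, p.Prime → ¬ p ∣ N → ∀ r : ℕ,
      a (p ^ (r + 2)) = a p * a (p ^ (r + 1)) - (p : ℤ) ^ (k - 1) * a (p ^ r))
    (hdvd : ∀ p : ℕ, p.Prime → p ∣ N → ∀ r : ℕ, a (p ^ (r + 1)) = a p * a (p ^ r))
    (h2 : a 2 ≠ 2 ^ (k / 2)) (h2' : a 2 ≠ -(2 ^ (k / 2)))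
    (h3 : a 3 ≠ 3 ^ (k / 2)) (h3' : a 3 ≠ -(3 ^ (k / 2)))
    (n : ℕ) (hn : 0 < n) (han : a n = 0)
    (hmin : ∀ m : ℕ, 1 ≤ m → m < n → a m ≠ 0) :
    n.Prime := by
  obtain ⟨p, hp, hpn, hap⟩ :=
    stmt_7_general N k hk hke a ha1 hmul hrec hdvd h2 h2' h3 h3' n hn han
  have hpn_eq : p = n := (Nat.le_of_dvd hn hpn).eq_of_not_lt fun h ↦ hmin p hp.one_le h hap
  exact hpn_eq ▸ hp
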